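/- arXiv:math/0505242 — 6 statements merged into one kernel-verified Lean document; each statement's English description precedes it below -/
import Mathlib

section
/- Let R be a commutative ring, E an R-module and A = End_R(E). If N is a direct summand of E, then Ψ(N) = {f ∈ A : range f ⊆ N} is a right ideal of A which is a direct summand of A as a right A-module, and Φ(Ψ(N)) = N; that is, the R-submodule of E generated by the ranges of all endomorphisms f with range f ⊆ N is exactly N. -/
/-- `Ψ(N) = {f ∈ End_R(E) : range f ⊆ N}`, as an `R`-submodule of `End_R(E)`. -/
def psi {R E : Type*} [CommRing R] [AddCommGroup E] [Module R E]
    (N : Submodule R E) : Submodule R (Module.End R E) where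
  carrier := {f | LinearMap.range f ≤ N}
  add_mem' := by
    intro f g hf hg x hx
    obtain ⟨y, rfl⟩ := LinearMap.mem_range.mp hx
    show f y + g y ∈ N
    exact N.add_mem (hf (LinearMap.mem_range_self f y)) (hg (LinearMap.mem_range_self g y))
  zero_mem' := by
    intro x hx
    obtain ⟨y, rfl⟩ := LinearMap.mem_range.mp hx
    exact N.zero_mem
  smul_mem' := by
    intro c f hf x hx
    obtain ⟨y, rfl⟩ := LinearMap.mem_range.mp hx
    show c • f y ∈ N
    exact N.smul_mem c (hf (LinearMap.mem_range_self f y))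

/-- `Φ(I)`: the `R`-submodule of `E` generated by the union of the ranges of all `f ∈ I`. -/
def phi {R E : Type*} [CommRing R] [AddCommGroup E] [Module R E]
    (I : Submodule R (Module.End R E)) : Submodule R E :=
  Submodule.span R (⋃ f ∈ I, (LinearMap.range f : Set E))

/-- A right ideal of `End_R(E)`: an `R`-submodule closed under composition on the right. -/
def IsRightIdeal {R E : Type*} [CommRing R] [AddCommGroup E] [Module R E]
    (I : Submodule R (Module.End R E)) : Prop :=
  ∀ f ∈ I, ∀ g : Module.End R E, f * g ∈ I

/-- A submodule `N` of a module `M` is a direct summand. -/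
def IsSummand {R M : Type*} [CommRing R] [AddCommGroup M] [Module R M]
    (N : Submodule R M) : Prop :=
  ∃ N' : Submodule R M, N ⊓ N' = ⊥ ∧ N ⊔ N' = ⊤

/-- A right ideal `I` of `End_R(E)` is a direct summand of `End_R(E)` as a right module
over itself: there is a right ideal `J` with `I ∩ J = 0` and `I + J = End_R(E)`. -/
def IsIdealSummand {R E : Type*} [CommRing R] [AddCommGroup E] [Module R E]
    (I : Submodule R (Module.End R E)) : Prop :=
  ∃ J : Submodule R (Module.End R E), IsRightIdeal J ∧ I ⊓ J = ⊥ ∧ I ⊔ J = ⊤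

theorem mem_psi {R E : Type*} [CommRing R] [AddCommGroup E] [Module R E]
    {N : Submodule R E} {f : Module.End R E} : f ∈ psi N ↔ ∀ x, f x ∈ N :=
  ⟨fun h x => h (LinearMap.mem_range_self f x), fun h => by rintro _ ⟨x, rfl⟩; exact h x⟩

theorem isRightIdeal_psi {R E : Type*} [CommRing R] [AddCommGroup E] [Module R E]
    (N : Submodule R E) : IsRightIdeal (psi N) :=
  fun _ hf g => mem_psi.2 fun x => mem_psi.1 hf (g x)

theorem psi_inf_psi_eq_bot {R E : Type*} [CommRing R] [AddCommGroup E] [Module R E]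
    {N N' : Submodule R E} (h : N ⊓ N' = ⊥) : psi N ⊓ psi N' = ⊥ := by
  refine (Submodule.eq_bot_iff _).2 fun f hf => LinearMap.ext fun x => ?_
  exact (Submodule.eq_bot_iff _).1 h _ ⟨mem_psi.1 hf.1 x, mem_psi.1 hf.2 x⟩

theorem psi_sup_psi_eq_top {R E : Type*} [CommRing R] [AddCommGroup E] [Module R E]
    {N N' : Submodule R E} (h : IsCompl N N') : psi N ⊔ psi N' = ⊤ := by
  refine eq_top_iff.2 fun f _ => Submodule.mem_sup.2
    ⟨N.projection N' h * f, mem_psi.2 fun x => ?_, N'.projection N h.symm * f, mem_psi.2 fun x => ?_, ?_⟩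
  · exact Submodule.projection_apply_mem h (f x)
  · exact Submodule.projection_apply_mem h.symm (f x)
  · ext x
    exact Submodule.projection_add_projection_eq_self h (f x)

theorem phi_psi_le {R E : Type*} [CommRing R] [AddCommGroup E] [Module R E]
    (N : Submodule R E) : phi (psi N) ≤ N :=
  Submodule.span_le.2 (Set.iUnion₂_subset fun _ hf => hf)

theorem le_phi_psi {R E : Type*} [CommRing R] [AddCommGroup E] [Module R E]
    {N N' : Submodule R E} (h : IsCompl N N') : N ≤ phi (psi N) := fun x hx =>
  Submodule.subset_span (Set.mem_iUnion₂.2 ⟨N.projection N' h,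
    mem_psi.2 (Submodule.projection_apply_mem h),
    x, Submodule.projection_apply_left h ⟨x, hx⟩⟩)

/-- If `N` is a direct summand of `E`, then `Ψ(N)` is a right ideal of `A = End_R(E)` which is
a direct summand of `A` as a right `A`-module, and `Φ(Ψ(N)) = N`. -/
theorem psi_of_summand {R E : Type*} [CommRing R] [AddCommGroup E] [Module R E]
    (N : Submodule R E) (hN : ∃ N' : Submodule R E, N ⊓ N' = ⊥ ∧ N ⊔ N' = ⊤) :
    IsRightIdeal (psi N) ∧
    (∃ J : Submodule R (Module.End R E), IsRightIdeal J ∧ psi N ⊓ J = ⊥ ∧ psi N ⊔ J = ⊤) ∧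
    phi (psi N) = N := by
  obtain ⟨N', hinf, hsup⟩ := hN
  have h : IsCompl N N' := ⟨disjoint_iff.2 hinf, codisjoint_iff.2 hsup⟩
  exact ⟨isRightIdeal_psi N,
    ⟨psi N', isRightIdeal_psi N', psi_inf_psi_eq_bot hinf, psi_sup_psi_eq_top h⟩,
    le_antisymm (phi_psi_le N) (le_phi_psi h)⟩
end

section
/- Let R be a commutative ring, E an R-module and A = End_R(E). If I is a right ideal of A which is a direct summand of A as a right A-module, then Φ(I) is a direct summand of E and Ψ(Φ(I)) = I; that is, I consists exactly of those endomorphisms of E whose range is contained in the R-submodule of E generated by the ranges of the elements of I. -/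
/-- A right ideal which is a direct summand of `End_R(E)` contains a left identity for itself. -/
theorem IsRightIdeal.exists_left_identity {R E : Type*} [CommRing R] [AddCommGroup E] [Module R E]
    {I J : Submodule R (Module.End R E)} (hI : IsRightIdeal I) (hJ : IsRightIdeal J)
    (hinf : I ⊓ J = ⊥) (hsup : I ⊔ J = ⊤) : ∃ p ∈ I, ∀ f ∈ I, p * f = f := by
  obtain ⟨p, hp, q, hq, hpq⟩ := Submodule.mem_sup.mp (hsup ▸ Submodule.mem_top :
    (1 : Module.End R E) ∈ I ⊔ J)
  refine ⟨p, hp, fun f hf => ?_⟩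
  have hqf : f - p * f = q * f := by
    rw [sub_eq_iff_eq_add', ← add_mul, hpq, one_mul]
  have hmem : f - p * f ∈ I ⊓ J := ⟨I.sub_mem hf (hI p hp f), hqf ▸ hJ q hq f⟩
  rw [hinf, Submodule.mem_bot, sub_eq_zero] at hmem
  exact hmem.symm

/-- If `p ∈ I` is a left identity for `I`, then `Φ(I)` is the range of `p`. -/
theorem phi_eq_range {R E : Type*} [CommRing R] [AddCommGroup E] [Module R E]
    {I : Submodule R (Module.End R E)} {p : Module.End R E} (hp : p ∈ I)
    (hleft : ∀ f ∈ I, p * f = f) : phi I = LinearMap.range p := by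
  refine le_antisymm (Submodule.span_le.mpr ?_) fun x hx =>
    Submodule.subset_span (Set.mem_biUnion hp hx)
  refine Set.iUnion₂_subset fun f hf => ?_
  rintro _ ⟨y, rfl⟩
  exact ⟨f y, LinearMap.congr_fun (hleft f hf) y⟩

/-- If `I` is a right ideal of `A = End_R(E)` which is a direct summand of `A` as a right
`A`-module, then `Φ(I)` is a direct summand of `E` and `Ψ(Φ(I)) = I`. -/
theorem phi_of_ideal_summand {R E : Type*} [CommRing R] [AddCommGroup E] [Module R E]
    (I : Submodule R (Module.End R E)) (hI : IsRightIdeal I)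
    (hsum : ∃ J : Submodule R (Module.End R E), IsRightIdeal J ∧ I ⊓ J = ⊥ ∧ I ⊔ J = ⊤) :
    (∃ N' : Submodule R E, phi I ⊓ N' = ⊥ ∧ phi I ⊔ N' = ⊤) ∧
    psi (phi I) = I := by
  obtain ⟨J, hJ, hinf, hsup⟩ := hsum
  obtain ⟨p, hp, hleft⟩ := hI.exists_left_identity hJ hinf hsup
  have hidem : IsIdempotentElem p := hleft p hp
  rw [phi_eq_range hp hleft]
  have hcompl := LinearMap.IsIdempotentElem.isCompl hidem
  refine ⟨⟨LinearMap.ker p, hcompl.inf_eq_bot, hcompl.sup_eq_top⟩, ?_⟩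
  ext f
  refine ⟨fun hf => ?_, fun hf => ?_⟩
  · have hpf : p * f = f := by
      ext x
      obtain ⟨y, hy⟩ := hf (LinearMap.mem_range_self f x)
      rw [Module.End.mul_apply, ← hy]
      exact LinearMap.congr_fun hidem y
    exact hpf ▸ hI p hp f
  · rintro _ ⟨y, rfl⟩
    exact ⟨f y, LinearMap.congr_fun (hleft f hf) y⟩
end

section
/- Let k be a field, V a finite-dimensional k-vector space, B a nondegenerate alternating bilinear form on V, and σ the adjoint involution of B. Then for every subspace N of V one has Ψ(N)^⊥ = Ψ(N^⊥); that is, an endomorphism x of V satisfies σ(x) ∘ y = 0 for all y ∈ End_k(V) with range y ⊆ N if and only if range x ⊆ N^⊥. -/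
/-- For a bilinear form `B` on `V` and a subspace `N`,
`N^⊥ = {v ∈ V : B(n, v) = 0 for all n ∈ N}`. -/
def subPerp {k V : Type*} [CommRing k] [AddCommGroup V] [Module k V]
    (B : V →ₗ[k] V →ₗ[k] k) (N : Submodule k V) : Submodule k V where
  carrier := {v | ∀ n ∈ N, B n v = 0}
  add_mem' := by
    intro x y hx hy n hn
    simp [map_add, hx n hn, hy n hn]
  zero_mem' := by
    intro n hn
    simp
  smul_mem' := by
    intro c x hx n hn
    simp [hx n hn]

/-- Let `B` be a nondegenerate alternating bilinear form on a finite-dimensional vector space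
`V` and `σ` the adjoint involution of `B`. Then for every subspace `N` one has
`Ψ(N)^⊥ = Ψ(N^⊥)`: an endomorphism `x` satisfies `σ(x) ∘ y = 0` for all `y` with
`range y ⊆ N` if and only if `range x ⊆ N^⊥`. -/
theorem perp_psi_eq_psi_perp (k V : Type*) [Field k] [AddCommGroup V] [Module k V]
    [FiniteDimensional k V] (B : V →ₗ[k] V →ₗ[k] k)
    (halt : ∀ v : V, B v v = 0)
    (hnd₁ : ∀ u : V, (∀ v : V, B u v = 0) → u = 0)
    (hnd₂ : ∀ v : V, (∀ u : V, B u v = 0) → v = 0)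
    (σ : Module.End k V → Module.End k V)
    (hσ : ∀ (f : Module.End k V) (u v : V), B (f u) v = B u (σ f v)) :
    ∀ (N : Submodule k V) (x : Module.End k V),
      (∀ y : Module.End k V, y ∈ psi N → σ x * y = 0) ↔ x ∈ psi (subPerp B N) := by
  have hskew : ∀ u v : V, B u v = 0 → B v u = 0 :=
    LinearMap.IsAlt.isRefl (B := B) halt
  intro N x
  constructor
  · rintro h _ ⟨u, rfl⟩ n hn
    obtain ⟨p, hp⟩ := N.subtype.exists_leftInverse_of_injective N.ker_subtype
    have hy : N.subtype ∘ₗ p ∈ psi N := by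
      rintro _ ⟨v, rfl⟩
      exact (p v).2
    have hpn : p n = ⟨n, hn⟩ := LinearMap.congr_fun hp ⟨n, hn⟩
    have hσn : σ x n = 0 := by
      simpa [hpn] using LinearMap.congr_fun (h _ hy) n
    apply hskew
    rw [hσ, hσn, map_zero]
  · intro hx y hy
    ext v
    refine hnd₂ _ fun u => ?_
    rw [Module.End.mul_apply, ← hσ]
    exact hskew _ _ (hx (LinearMap.mem_range_self x u) _ (hy (LinearMap.mem_range_self y v)))
end

section
/- Let k be a field, V a finite-dimensional k-vector space, B a nondegenerate alternating bilinear form on V, and σ the adjoint involution of B. Then for any two subspaces N₁, N₂ of V one has Ψ(N₁) ⊆ Ψ(N₂)^⊥ if and only if N₁ ⊆ N₂^⊥; equivalently, for right ideals I₁, I₂ of End_k(V), I₁ ⊆ I₂^⊥ if and only if Φ(I₁) ⊆ Φ(I₂)^⊥. -/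
theorem mem_psi_iff {R E : Type*} [CommRing R] [AddCommGroup E] [Module R E]
    {N : Submodule R E} {f : Module.End R E} : f ∈ psi N ↔ ∀ v, f v ∈ N :=
  Set.range_subset_iff

theorem phi_le_iff {R E : Type*} [CommRing R] [AddCommGroup E] [Module R E]
    {I : Submodule R (Module.End R E)} {N : Submodule R E} :
    phi I ≤ N ↔ ∀ f ∈ I, ∀ v, f v ∈ N := by
  simp only [phi, Submodule.span_le, Set.iUnion_subset_iff, SetLike.coe_subset_coe]
  exact forall₂_congr fun _ _ => mem_psi_iff

theorem apply_mem_phi {R E : Type*} [CommRing R] [AddCommGroup E] [Module R E]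
    {I : Submodule R (Module.End R E)} {f : Module.End R E} (hf : f ∈ I) (v : E) :
    f v ∈ phi I :=
  phi_le_iff.mp le_rfl f hf v

/-- Over a field every subspace is the range of a projection, so `Φ` is a left inverse of `Ψ`. -/
theorem phi_psi {k V : Type*} [Field k] [AddCommGroup V] [Module k V] (N : Submodule k V) :
    phi (psi N) = N := by
  refine le_antisymm (phi_le_iff.mpr fun f hf => mem_psi_iff.mp hf) fun n hn => ?_
  obtain ⟨p, hp⟩ := N.subtype.exists_leftInverse_of_injective N.ker_subtype
  have hpn : (N.subtype ∘ₗ p) n = n :=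
    congrArg Subtype.val (LinearMap.congr_fun hp ⟨n, hn⟩)
  rw [← hpn]
  exact apply_mem_phi (mem_psi_iff.mpr fun v => (p v).2) n

/-- For a reflexive form, orthogonality of subspaces is symmetric. -/
theorem le_subPerp_comm {k V : Type*} [CommRing k] [AddCommGroup V] [Module k V]
    {B : V →ₗ[k] V →ₗ[k] k} (hB : B.IsRefl) {M N : Submodule k V} :
    M ≤ subPerp B N ↔ N ≤ subPerp B M :=
  ⟨fun h n hn _ hm => hB _ _ (h hm n hn), fun h m hm _ hn => hB _ _ (h hn m hm)⟩

/-- For a reflexive form, `Φ(I) ⊆ Φ(J)^⊥` can be tested on the elements of the ranges. -/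
theorem phi_le_subPerp_phi_iff {k V : Type*} [CommRing k] [AddCommGroup V] [Module k V]
    {B : V →ₗ[k] V →ₗ[k] k} (hB : B.IsRefl) {I J : Submodule k (Module.End k V)} :
    phi I ≤ subPerp B (phi J) ↔ ∀ x ∈ I, ∀ y ∈ J, ∀ u v, B (x u) (y v) = 0 := by
  refine ⟨fun h x hx y hy u v =>
    hB _ _ (h (apply_mem_phi hx u) _ (apply_mem_phi hy v)), fun h => ?_⟩
  refine phi_le_iff.mpr fun x hx u => ?_
  have hJ : phi J ≤ subPerp B (k ∙ x u) := phi_le_iff.mpr fun y hy v n hn => by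
    obtain ⟨c, rfl⟩ := Submodule.mem_span_singleton.mp hn
    simp [h x hx y hy u v]
  exact (le_subPerp_comm hB).mp hJ (Submodule.mem_span_singleton_self _)

theorem adjoint_mul_eq_zero_iff {k V : Type*} [CommRing k] [AddCommGroup V] [Module k V]
    {B : V →ₗ[k] V →ₗ[k] k} (hB : B.SeparatingRight) {x x' y : Module.End k V}
    (hx : ∀ u v, B (x u) v = B u (x' v)) :
    x' * y = 0 ↔ ∀ u v, B (x u) (y v) = 0 := by
  refine ⟨fun h u v => ?_, fun h => LinearMap.ext fun v => hB _ fun u => ?_⟩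
  · rw [hx, ← Module.End.mul_apply, h, LinearMap.zero_apply, map_zero]
  · rw [Module.End.mul_apply, ← hx, h]

/-- Let `B` be a nondegenerate alternating bilinear form on a finite-dimensional vector space
`V` and `σ` the adjoint involution of `B`. For subspaces `N₁, N₂` of `V` one has
`Ψ(N₁) ⊆ Ψ(N₂)^⊥` iff `N₁ ⊆ N₂^⊥`; equivalently, for right ideals `I₁, I₂` of `End_k(V)`,
`I₁ ⊆ I₂^⊥` iff `Φ(I₁) ⊆ Φ(I₂)^⊥`. Here `I^⊥ = {x : σ(x) ∘ y = 0 for all y ∈ I}`. -/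
theorem psi_le_perp_iff (k V : Type*) [Field k] [AddCommGroup V] [Module k V]
    [FiniteDimensional k V] (B : V →ₗ[k] V →ₗ[k] k)
    (halt : ∀ v : V, B v v = 0)
    (hnd₁ : ∀ u : V, (∀ v : V, B u v = 0) → u = 0)
    (hnd₂ : ∀ v : V, (∀ u : V, B u v = 0) → v = 0)
    (σ : Module.End k V → Module.End k V)
    (hσ : ∀ (f : Module.End k V) (u v : V), B (f u) v = B u (σ f v)) :
    (∀ N₁ N₂ : Submodule k V,
        (∀ x ∈ psi N₁, ∀ y ∈ psi N₂, σ x * y = 0) ↔ N₁ ≤ subPerp B N₂) ∧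
    (∀ I₁ I₂ : Submodule k (Module.End k V), IsRightIdeal I₁ → IsRightIdeal I₂ →
        ((∀ x ∈ I₁, ∀ y ∈ I₂, σ x * y = 0) ↔ phi I₁ ≤ subPerp B (phi I₂))) := by
  have hB : B.IsRefl := LinearMap.IsAlt.isRefl halt
  have main : ∀ I₁ I₂ : Submodule k (Module.End k V),
      (∀ x ∈ I₁, ∀ y ∈ I₂, σ x * y = 0) ↔ phi I₁ ≤ subPerp B (phi I₂) := fun I₁ I₂ => by
    simp only [phi_le_subPerp_phi_iff hB, adjoint_mul_eq_zero_iff hnd₂ (hσ _)]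
  refine ⟨fun N₁ N₂ => ?_, fun I₁ I₂ _ _ => main I₁ I₂⟩
  rw [main, phi_psi, phi_psi]
end

section
/- Let R be a commutative ring, M an R-module, and B an alternating R-bilinear form on M. If N is a submodule of M such that for every maximal ideal m of R the localization of N at m is a cyclic module over the localization of R at m, then B(u, v) = 0 for all u, v ∈ N; in particular, every direct summand of M of rank 1 is totally isotropic. -/
/-- If `n / s` generates the localization of a module at `S`, then each element of the module
has a multiple by an element of `S` which is a multiple of `n`. -/
theorem LocalizedModule.exists_smul_eq_smul_of_span_mk_eq_top {R N : Type*} [CommRing R]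
    [AddCommGroup N] [Module R N] {S : Submonoid R} {n : N} {s : S}
    (h : Submodule.span (Localization S) {LocalizedModule.mk n s} = ⊤) (u : N) :
    ∃ t ∈ S, ∃ r : R, t • u = r • n := by
  have hu : LocalizedModule.mk u 1 ∈
      Submodule.span (Localization S) {LocalizedModule.mk n s} := h ▸ Submodule.mem_top
  obtain ⟨x, hx⟩ := Submodule.mem_span_singleton.mp hu
  induction x using Localization.induction_on with
  | H y =>
    obtain ⟨a, b⟩ := y
    rw [LocalizedModule.mk_smul_mk, LocalizedModule.mk_eq] at hx
    obtain ⟨c, hc⟩ := hx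
    refine ⟨c * (b * s), S.mul_mem c.2 (S.mul_mem b.2 s.2), c * a, ?_⟩
    simp only [Submonoid.smul_def, Submonoid.coe_mul, one_smul] at hc
    rw [mul_smul, ← hc, mul_smul]

/-- Let `B` be an alternating bilinear form on an `R`-module `M`. If `N` is a submodule of `M`
whose localization at every maximal ideal `m` of `R` is a cyclic module over the localization
of `R` at `m`, then `B(u, v) = 0` for all `u, v ∈ N`; in particular, every direct summand of
`M` of rank `1` is totally isotropic. -/
theorem locally_cyclic_totally_isotropic {R M : Type*} [CommRing R] [AddCommGroup M]
    [Module R M] (B : M →ₗ[R] M →ₗ[R] R) (halt : ∀ u : M, B u u = 0)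
    (N : Submodule R M)
    (hN : ∀ (m : Ideal R) [m.IsMaximal],
      ∃ g : LocalizedModule m.primeCompl N,
        Submodule.span (Localization m.primeCompl) {g} = ⊤) :
    ∀ u ∈ N, ∀ v ∈ N, B u v = 0 := by
  intro u hu v hv
  by_contra hne
  obtain ⟨m, hm, hle⟩ := Ideal.exists_le_maximal (Ideal.span {B u v}).annihilator fun htop =>
    hne (by simpa [Submodule.annihilator_eq_top_iff] using htop)
  obtain ⟨g, hg⟩ := hN m
  induction g using LocalizedModule.induction_on with
  | h n s =>
    obtain ⟨t, ht, r, hr⟩ :=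
      LocalizedModule.exists_smul_eq_smul_of_span_mk_eq_top hg ⟨u, hu⟩
    obtain ⟨t', ht', r', hr'⟩ :=
      LocalizedModule.exists_smul_eq_smul_of_span_mk_eq_top hg ⟨v, hv⟩
    replace hr : t • u = r • (n : M) := congrArg Subtype.val hr
    replace hr' : t' • v = r' • (n : M) := congrArg Subtype.val hr'
    have hzero : t * t' * B u v = 0 := by
      calc t * t' * B u v = B (t • u) (t' • v) := by
            simp only [map_smul, LinearMap.smul_apply, smul_eq_mul]; ring
        _ = 0 := by simp [hr, hr', halt]
    exact m.primeCompl.mul_mem ht ht'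
      (hle ((Submodule.mem_annihilator_span_singleton _ _).mpr hzero))
end

section
/- For all natural numbers a and b, the following identity holds in the polynomial ring ℤ[z]: (∑_λ z^{|λ|}) · ∏_{k=1}^{a} (z^k − 1) = ∏_{k=b+1}^{a+b} (z^k − 1), where the sum is taken over all partitions λ = (λ₁, …, λ_a) with b ≥ λ₁ ≥ λ₂ ≥ … ≥ λ_a ≥ 0, i.e., over all antitone functions λ : Fin a → ℕ with all values at most b, and |λ| = λ₁ + … + λ_a. -/
open Polynomial

/-- The partitions fitting in an `a × b` box, as `ℕ`-valued antitone functions. -/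
noncomputable def boxPartitions (a b : ℕ) : Finset (Fin a → ℕ) :=
  open Classical in (Fintype.piFinset fun _ => Finset.range (b + 1)).filter Antitone

/-- The generating function of the partitions fitting in an `a × b` box, by size. -/
noncomputable def boxGenFun (a b : ℕ) : ℤ[X] :=
  ∑ l ∈ boxPartitions a b, X ^ ∑ i, l i

lemma mem_boxPartitions {a b : ℕ} {l : Fin a → ℕ} :
    l ∈ boxPartitions a b ↔ (∀ i, l i ≤ b) ∧ Antitone l := by
  simp [boxPartitions]

lemma boxGenFun_zero_left (b : ℕ) : boxGenFun 0 b = 1 := by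
  have h : boxPartitions 0 b = {0} := by
    ext l
    simp [mem_boxPartitions, Subsingleton.elim l 0, Subsingleton.antitone]
  simp [boxGenFun, h]

lemma boxGenFun_zero_right (a : ℕ) : boxGenFun a 0 = 1 := by
  have h : boxPartitions a 0 = {0} := by
    ext l
    rw [mem_boxPartitions, Finset.mem_singleton]
    constructor
    · rintro ⟨h, -⟩
      exact funext fun i => Nat.le_zero.mp (h i)
    · rintro rfl
      exact ⟨fun _ => le_rfl, antitone_const⟩
  simp [boxGenFun, h]

lemma antitone_cons {a c : ℕ} {l : Fin a → ℕ} (hc : ∀ i, l i ≤ c) (hl : Antitone l) :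
    Antitone (Fin.cons c l : Fin (a + 1) → ℕ) := by
  intro i j hij
  induction i using Fin.cases with
  | zero =>
    induction j using Fin.cases with
    | zero => exact le_rfl
    | succ j => simpa using hc j
  | succ i =>
    induction j using Fin.cases with
    | zero => exact absurd hij (by simp)
    | succ j => simpa using hl (Fin.succ_le_succ_iff.mp hij)

/-- Partitions in a box either have largest part less than the width, or equal to it. -/
lemma boxPartitions_succ_succ (a b : ℕ) :
    boxPartitions (a + 1) (b + 1) = boxPartitions (a + 1) b ∪
      (boxPartitions a (b + 1)).image (fun l => (Fin.cons (b + 1) l : Fin (a + 1) → ℕ)) := by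
  ext l
  simp only [Finset.mem_union, Finset.mem_image, mem_boxPartitions]
  constructor
  · rintro ⟨hb, hl⟩
    rcases (hb 0).lt_or_eq with h | h
    · exact Or.inl ⟨fun i => (hl (Fin.zero_le i)).trans (Nat.lt_succ_iff.mp h), hl⟩
    · refine Or.inr ⟨Fin.tail l, ⟨fun i => hb i.succ, fun i j hij => ?_⟩, ?_⟩
      · exact hl (Fin.succ_le_succ_iff.mpr hij)
      · rw [← h, Fin.cons_self_tail]
  · rintro (⟨hb, hl⟩ | ⟨m, ⟨hb, hm⟩, rfl⟩)
    · exact ⟨fun i => (hb i).trans b.le_succ, hl⟩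
    · exact ⟨fun i => Fin.cases le_rfl hb i, antitone_cons hb hm⟩

lemma boxGenFun_succ_succ (a b : ℕ) :
    boxGenFun (a + 1) (b + 1) =
      boxGenFun (a + 1) b + X ^ (b + 1) * boxGenFun a (b + 1) := by
  have hdisj : Disjoint (boxPartitions (a + 1) b)
      ((boxPartitions a (b + 1)).image
        (fun l => (Fin.cons (b + 1) l : Fin (a + 1) → ℕ))) := by
    rw [Finset.disjoint_left]
    intro l hl hl'
    obtain ⟨m, -, rfl⟩ := Finset.mem_image.mp hl'
    simpa using (mem_boxPartitions.mp hl).1 0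
  rw [boxGenFun, boxPartitions_succ_succ, Finset.sum_union hdisj,
    Finset.sum_image fun _ _ _ _ h => Fin.cons_right_injective _ h]
  simp [boxGenFun, Fin.sum_univ_succ, pow_add, Finset.mul_sum]

lemma boxGenFun_mul_prod (a b : ℕ) :
    boxGenFun a b * ∏ k ∈ Finset.range a, (X ^ (k + 1) - 1) =
      ∏ k ∈ Finset.range a, (X ^ (b + 1 + k) - 1) := by
  induction a generalizing b with
  | zero => simp [boxGenFun_zero_left]
  | succ a iha =>
    induction b with
    | zero => simp [boxGenFun_zero_right, add_comm]
    | succ b ihb =>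
      have hshift : ∏ k ∈ Finset.range (a + 1), ((X : ℤ[X]) ^ (b + 1 + k) - 1) =
          (∏ k ∈ Finset.range a, (X ^ (b + 1 + 1 + k) - 1)) * (X ^ (b + 1) - 1) := by
        rw [Finset.prod_range_succ']
        simp only [add_zero, add_assoc, add_comm 1]
      rw [boxGenFun_succ_succ, add_mul, ihb, hshift, Finset.prod_range_succ,
        Finset.prod_range_succ]
      linear_combination (X : ℤ[X]) ^ (b + 1) * (X ^ (a + 1) - 1) * iha (b + 1)

lemma sum_antitone_eq_boxGenFun (a b : ℕ) :
    ∑ l ∈ Finset.univ.filter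
        (fun f : Fin a → Fin (b + 1) => ∀ i j : Fin a, i ≤ j → f j ≤ f i),
      (X : ℤ[X]) ^ (∑ i : Fin a, (l i : ℕ)) = boxGenFun a b := by
  refine Finset.sum_bij (fun l _ i => (l i : ℕ)) ?_ ?_ ?_ fun _ _ => rfl
  · intro l hl
    exact mem_boxPartitions.mpr
      ⟨fun i => Nat.lt_succ_iff.mp (l i).isLt, (Finset.mem_filter.mp hl).2⟩
  · intro l _ m _ h
    exact funext fun i => Fin.ext (congrFun h i)
  · intro l hl
    obtain ⟨hb, hl⟩ := mem_boxPartitions.mp hl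
    exact ⟨fun i => ⟨l i, Nat.lt_succ_iff.mpr (hb i)⟩,
      Finset.mem_filter.mpr ⟨Finset.mem_univ _, fun _ _ hij => hl hij⟩, rfl⟩

/-- In `ℤ[z]`: `(∑_λ z^{|λ|}) · ∏_{k=1}^{a} (z^k − 1) = ∏_{k=b+1}^{a+b} (z^k − 1)`, where the
sum runs over all partitions `λ = (λ₁ ≥ … ≥ λ_a)` fitting in an `a × b` box, encoded as
antitone functions `λ : Fin a → Fin (b+1)`, and `|λ| = λ₁ + … + λ_a`. -/
theorem partition_box_generating_identity (a b : ℕ) :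
    (∑ l ∈ Finset.univ.filter (fun f : Fin a → Fin (b + 1) => ∀ i j : Fin a, i ≤ j → f j ≤ f i),
        (X : Polynomial ℤ) ^ (∑ i : Fin a, (l i : ℕ))) *
      ∏ k ∈ Finset.Icc 1 a, ((X : Polynomial ℤ) ^ k - 1) =
    ∏ k ∈ Finset.Icc (b + 1) (a + b), ((X : Polynomial ℤ) ^ k - 1) := by
  rw [sum_antitone_eq_boxGenFun, ← Finset.Ico_add_one_right_eq_Icc,
    ← Finset.Ico_add_one_right_eq_Icc, Finset.prod_Ico_eq_prod_range,
    Finset.prod_Ico_eq_prod_range, show a + b + 1 - (b + 1) = a by lia, Nat.add_sub_cancel,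
    ← boxGenFun_mul_prod a b]
  simp only [Nat.add_comm 1]
end
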